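/- Let p, q ∈ R be idempotents such that p - q is group invertible. Then f, g and h are idempotents, f*R = (p*h)*R = (p-q1)*R, and g° = (p*h)° = (p-q1)°. -/

import Mathlib

variable {R : Type*} [Ring R]

/-- `c` is a group inverse of `a`. -/
def IsGroupInvOf (a c : R) : Prop := a * c * a = a ∧ c * a * c = c ∧ a * c = c * a

/-- `a` is group invertible. -/
def GroupInvertible (a : R) : Prop := ∃ c, IsGroupInvOf a c

/-- The group inverse `a^#` (junk value `0` if it does not exist). -/
noncomputable def gi (a : R) : R :=
  haveI := Classical.dec (GroupInvertible a)
  if h : GroupInvertible a then h.choose else 0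

/-- The spectral idempotent `a^π = 1 - a * a^#`. -/
noncomputable def sp (a : R) : R := 1 - a * gi a

/-- The right multiples `x*R`. -/
def rMul (x : R) : Set R := {z | ∃ y, z = x * y}

/-- The right annihilator `x°`. -/
def rAnn (x : R) : Set R := {y | x * y = 0}

/-!
Write `a = p - q` and `c = a^#`. Although `p` need not commute with `a`, it commutes with `a²`:
`p * a² = p * a * p = a² * p = p - p * q * p`. A group inverse lies in the double commutant of its
element and `c²` is the group inverse of `a²`, so `p` commutes with `c²` and with
`h = c * a = c² * a²`. Splitting `c = c² * a` then gives `p * c * p = h * p`, hence the idempotency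
of `p * c` and `c * p`. Since `c * a` is a unit for both `a` and `c`, the elements `p * c`,
`p * c * a` and `p * a²` are right multiples of one another, and `c * p`, `c * a * p` and `a² * p`
are left multiples of one another; this compares the right ideals and the annihilators.
-/

theorem isGroupInvOf_gi {a : R} (ha : GroupInvertible a) : IsGroupInvOf a (gi a) := by
  rw [gi, dif_pos ha]
  exact ha.choose_spec

theorem rMul_mul_subset (x y : R) : rMul (x * y) ⊆ rMul x := by
  rintro _ ⟨z, rfl⟩
  exact ⟨y * z, mul_assoc x y z⟩

theorem rAnn_subset_rAnn_mul (x y : R) : rAnn y ⊆ rAnn (x * y) := by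
  intro z (hz : y * z = 0)
  change x * y * z = 0
  rw [mul_assoc, hz, mul_zero]

namespace IsGroupInvOf

variable {a c x : R}

theorem symm (h : IsGroupInvOf a c) : IsGroupInvOf c a :=
  ⟨h.2.1, h.1, h.2.2.symm⟩

theorem commute (h : IsGroupInvOf a c) : Commute a c :=
  h.2.2

theorem inv_mul_mul_self (h : IsGroupInvOf a c) : c * a * a = a := by
  rw [← h.commute.eq, h.1]

theorem mul_inv_mul_self (h : IsGroupInvOf a c) : a * (c * a) = a := by
  rw [← mul_assoc, h.1]

theorem inv_mul_inv_mul (h : IsGroupInvOf a c) : c * (c * a) = c := by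
  rw [← h.commute.eq, h.symm.mul_inv_mul_self]

theorem isIdempotentElem_inv_mul (h : IsGroupInvOf a c) : IsIdempotentElem (c * a) := by
  rw [IsIdempotentElem, mul_assoc, h.mul_inv_mul_self]

theorem pow (h : IsGroupInvOf a c) (n : ℕ) : IsGroupInvOf (a ^ n) (c ^ n) := by
  have pow_mul_mul {b d : R} (hbd : IsGroupInvOf b d) : b ^ n * d ^ n * b ^ n = b ^ n := by
    have hcomm : Commute (b * d) b := (Commute.refl b).mul_left hbd.commute.symm
    rw [← hbd.commute.mul_pow, ← hcomm.mul_pow, hbd.1]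
  exact ⟨pow_mul_mul h, pow_mul_mul h.symm, h.commute.pow_pow n n⟩

theorem commute_inv_mul_of_commute (h : IsGroupInvOf a c) (hx : Commute x a) :
    Commute x (c * a) := by
  have left_absorb : c * a * x * (c * a) = c * a * x := by
    calc c * a * x * (c * a) = c * (a * x) * (c * a) := by rw [mul_assoc c a x]
      _ = c * x * (a * (c * a)) := by rw [← hx.eq]; simp only [mul_assoc]
      _ = c * a * x := by rw [h.mul_inv_mul_self, mul_assoc, hx.eq, mul_assoc]
  have right_absorb : c * a * x * (c * a) = x * (c * a) := by
    calc c * a * x * (c * a) = c * a * (x * a) * c := by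
          rw [← h.commute.eq]; simp only [mul_assoc]
      _ = c * a * a * x * c := by rw [hx.eq]; simp only [mul_assoc]
      _ = x * (c * a) := by rw [h.inv_mul_mul_self, ← hx.eq, mul_assoc, h.commute.eq]
  exact right_absorb.symm.trans left_absorb

theorem commute_inv_of_commute (h : IsGroupInvOf a c) (hx : Commute x a) : Commute x c := by
  have hxe : Commute x (c * a) := h.commute_inv_mul_of_commute hx
  calc x * c = x * (c * a) * c := by rw [mul_assoc, h.2.1]
    _ = c * (a * x) * c := by rw [hxe.eq, mul_assoc c a x]
    _ = c * (x * (c * a)) := by rw [← hx.eq, ← h.commute.eq]; simp only [mul_assoc]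
    _ = c * x := by rw [hxe.eq, ← mul_assoc, ← mul_assoc, mul_assoc c c a, h.inv_mul_inv_mul]

theorem inv_sq_mul_sq (h : IsGroupInvOf a c) : c ^ 2 * a ^ 2 = c * a := by
  rw [← h.symm.commute.mul_pow, pow_two, h.isIdempotentElem_inv_mul]

theorem commute_inv_mul_of_commute_sq (h : IsGroupInvOf a c) (hx : Commute x (a ^ 2)) :
    Commute x (c * a) :=
  h.inv_sq_mul_sq ▸ (h.pow 2).commute_inv_mul_of_commute hx

theorem mul_inv_mul_eq_of_commute_sq (h : IsGroupInvOf a c) (hx : Commute x (a ^ 2))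
    (hxax : x * a * x = a ^ 2 * x) : x * c * x = x * (c * a) := by
  have hxc : Commute x (c ^ 2) := (h.pow 2).commute_inv_of_commute hx
  have hc : c ^ 2 * a = c := by rw [pow_two, mul_assoc, h.inv_mul_inv_mul]
  calc x * c * x = x * c ^ 2 * a * x := by rw [mul_assoc x (c ^ 2), hc]
    _ = c ^ 2 * (x * a * x) := by simp only [hxc.eq, mul_assoc]
    _ = x * (c ^ 2 * a ^ 2) := by rw [hxax, ← hx.eq, ← mul_assoc, ← hxc.eq, mul_assoc]
    _ = x * (c * a) := by rw [h.inv_sq_mul_sq]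

theorem isIdempotentElem_mul_inv_of_commute_sq (h : IsGroupInvOf a c) (hx : Commute x (a ^ 2))
    (hxax : x * a * x = a ^ 2 * x) : IsIdempotentElem (x * c) := by
  calc x * c * (x * c) = x * (c * a) * c := by
        rw [← mul_assoc, h.mul_inv_mul_eq_of_commute_sq hx hxax]
    _ = x * c := by rw [mul_assoc, h.2.1]

theorem isIdempotentElem_inv_mul_of_commute_sq (h : IsGroupInvOf a c) (hx : Commute x (a ^ 2))
    (hxax : x * a * x = a ^ 2 * x) : IsIdempotentElem (c * x) := by
  calc c * x * (c * x) = c * (x * (c * a)) := by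
        rw [← h.mul_inv_mul_eq_of_commute_sq hx hxax]; simp only [mul_assoc]
    _ = c * (c * a) * x := by rw [(h.commute_inv_mul_of_commute_sq hx).eq, mul_assoc c (c * a) x]
    _ = c * x := by rw [h.inv_mul_inv_mul]

theorem rMul_mul_inv_mul (h : IsGroupInvOf a c) (x : R) : rMul (x * (c * a)) = rMul (x * c) := by
  refine Set.Subset.antisymm ?_ ?_
  · rw [← mul_assoc]
    exact rMul_mul_subset _ _
  · have hc : x * c = x * (c * a) * c := by rw [mul_assoc, h.2.1]
    exact hc ▸ rMul_mul_subset _ _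

theorem rMul_mul_eq_rMul_mul_inv (h : IsGroupInvOf a c) (x : R) :
    rMul (x * a) = rMul (x * c) := by
  rw [← h.symm.rMul_mul_inv_mul, h.commute.eq, h.rMul_mul_inv_mul]

theorem rMul_mul_sq (h : IsGroupInvOf a c) (x : R) : rMul (x * a ^ 2) = rMul (x * c) := by
  rw [pow_two, ← mul_assoc, h.rMul_mul_eq_rMul_mul_inv, mul_assoc, h.commute.eq,
    h.rMul_mul_inv_mul]

theorem rAnn_inv_mul_mul (h : IsGroupInvOf a c) (x : R) : rAnn (c * a * x) = rAnn (c * x) := by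
  refine Set.Subset.antisymm ?_ ?_
  · have hc : c * x = c * (c * a * x) := by rw [← mul_assoc, h.inv_mul_inv_mul]
    exact hc ▸ rAnn_subset_rAnn_mul _ _
  · rw [← h.commute.eq, mul_assoc]
    exact rAnn_subset_rAnn_mul _ _

theorem rAnn_mul_eq_rAnn_inv_mul (h : IsGroupInvOf a c) (x : R) :
    rAnn (a * x) = rAnn (c * x) := by
  rw [← h.symm.rAnn_inv_mul_mul, h.commute.eq, h.rAnn_inv_mul_mul]

theorem rAnn_sq_mul (h : IsGroupInvOf a c) (x : R) : rAnn (a ^ 2 * x) = rAnn (c * x) := by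
  rw [pow_two, mul_assoc, h.rAnn_mul_eq_rAnn_inv_mul, ← mul_assoc, h.rAnn_inv_mul_mul]

end IsGroupInvOf

section DifferenceOfIdempotents

variable {p q : R}

theorem mul_sub_mul_self_of_isIdempotentElem (hp : IsIdempotentElem p) (q : R) :
    p * (p - q) * p = p - p * q * p := by
  rw [mul_sub, sub_mul, hp.eq, hp.eq]

theorem mul_sub_sq_of_isIdempotentElem (hp : IsIdempotentElem p) (hq : IsIdempotentElem q) :
    p * (p - q) ^ 2 = p - p * q * p := by
  have hpqq : p * q * q = p * q := by rw [mul_assoc, hq.eq]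
  simp only [pow_two, mul_sub, sub_mul, ← mul_assoc, hp.eq, hpqq]
  abel

theorem sub_sq_mul_of_isIdempotentElem (hp : IsIdempotentElem p) (hq : IsIdempotentElem q) :
    (p - q) ^ 2 * p = p - p * q * p := by
  have hqpp : q * p * p = q * p := by rw [mul_assoc, hp.eq]
  simp only [pow_two, mul_sub, sub_mul, hp.eq, hq.eq, hqpp]
  abel

end DifferenceOfIdempotents

theorem fgh_idempotents (p q q1 f g h : R) (hp : p * p = p) (hq : q * q = q)
    (h1 : q1 = p * q * p) (hpq : GroupInvertible (p - q))
    (hf : f = p * gi (p - q)) (hg : g = gi (p - q) * p)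
    (hh : h = gi (p - q) * (p - q)) :
    f * f = f ∧ g * g = g ∧ h * h = h ∧
      rMul f = rMul (p * h) ∧ rMul f = rMul (p - q1) ∧
      rAnn g = rAnn (p * h) ∧ rAnn g = rAnn (p - q1) := by
  subst h1 hf hg hh
  have hc : IsGroupInvOf (p - q) (gi (p - q)) := isGroupInvOf_gi hpq
  have hleft : p * (p - q) ^ 2 = p - p * q * p := mul_sub_sq_of_isIdempotentElem hp hq
  have hright : (p - q) ^ 2 * p = p - p * q * p := sub_sq_mul_of_isIdempotentElem hp hq
  have hcomm : Commute p ((p - q) ^ 2) := hleft.trans hright.symm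
  have hpap : p * (p - q) * p = (p - q) ^ 2 * p :=
    (mul_sub_mul_self_of_isIdempotentElem hp q).trans hright.symm
  have hph : p * (gi (p - q) * (p - q)) = gi (p - q) * (p - q) * p :=
    hc.commute_inv_mul_of_commute_sq hcomm
  refine ⟨hc.isIdempotentElem_mul_inv_of_commute_sq hcomm hpap,
    hc.isIdempotentElem_inv_mul_of_commute_sq hcomm hpap, hc.isIdempotentElem_inv_mul,
    (hc.rMul_mul_inv_mul p).symm, ?_, ?_, ?_⟩
  · rw [← hleft, hc.rMul_mul_sq]
  · rw [hph, hc.rAnn_inv_mul_mul]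
  · rw [← hright, hc.rAnn_sq_mul]
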